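/- Let ρ_RQE be a state on H_R⊗H_Q⊗H_E (all finite-dimensional). Suppose that for all finite-dimensional Hilbert spaces H_{Q'}, H_{E'} and every isometry V : H_Q⊗H_E → H_{Q'}⊗H_{E'}, setting σ_{RQ'E'} = (1_R⊗V) ρ_RQE (1_R⊗V)†, the data-processing inequality I(R;Q)_ρ ≥ I(R;Q')_σ holds. Then I(R;E|Q)_ρ = 0. -/

import Mathlib

open Matrix Kronecker ComplexOrder

noncomputable section

/-- Von Neumann entropy `S(ρ) = -Tr[ρ log ρ]`, computed from the eigenvalues
(junk value `0` if `ρ` is not Hermitian). -/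
def vnEntropy {n : Type*} [Fintype n] [DecidableEq n] (ρ : Matrix n n ℂ) : ℝ :=
  if h : ρ.IsHermitian then ∑ i, Real.negMulLog (h.eigenvalues i) else 0

/-- Partial trace over the first tensor factor. -/
def ptraceLeft {A B : Type*} [Fintype A] (M : Matrix (A × B) (A × B) ℂ) : Matrix B B ℂ :=
  Matrix.of fun x y => ∑ a, M (a, x) (a, y)

/-- Partial trace over the second tensor factor. -/
def ptraceRight {A B : Type*} [Fintype B] (M : Matrix (A × B) (A × B) ℂ) : Matrix A A ℂ :=
  Matrix.of fun x y => ∑ b, M (x, b) (y, b)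

/-- Partial trace over the last factor of a tripartite operator on `R ⊗ Q ⊗ E`. -/
def ptrace3E {R Q E : Type*} [Fintype E] (M : Matrix (R × Q × E) (R × Q × E) ℂ) :
    Matrix (R × Q) (R × Q) ℂ :=
  Matrix.of fun x y => ∑ e, M (x.1, x.2, e) (y.1, y.2, e)

/-- A state is a positive semidefinite operator with unit trace. -/
def IsState {n : Type*} [Fintype n] (ρ : Matrix n n ℂ) : Prop :=
  ρ.PosSemidef ∧ ρ.trace = 1

/-- Quantum mutual information `I(A;B) = S(ρ_A) + S(ρ_B) - S(ρ_AB)`. -/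
def mutualInfo {A B : Type*} [Fintype A] [DecidableEq A] [Fintype B] [DecidableEq B]
    (ρ : Matrix (A × B) (A × B) ℂ) : ℝ :=
  vnEntropy (ptraceRight ρ) + vnEntropy (ptraceLeft ρ) - vnEntropy ρ

/-- Conditional quantum mutual information
`I(R;E|Q) = S(ρ_RQ) + S(ρ_QE) - S(ρ_RQE) - S(ρ_Q)`. -/
def condMutualInfo {R Q E : Type*} [Fintype R] [DecidableEq R] [Fintype Q] [DecidableEq Q]
    [Fintype E] [DecidableEq E] (ρ : Matrix (R × Q × E) (R × Q × E) ℂ) : ℝ :=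
  vnEntropy (ptrace3E ρ) + vnEntropy (ptraceLeft ρ) - vnEntropy ρ
    - vnEntropy (ptraceLeft (ptrace3E ρ))

/-- The map `id_n ⊗ Φ` obtained by applying `Φ` blockwise. -/
def idTensor {A B : Type*} (n : Type*) (Φ : Matrix A A ℂ →ₗ[ℂ] Matrix B B ℂ)
    (M : Matrix (n × A) (n × A) ℂ) : Matrix (n × B) (n × B) ℂ :=
  Matrix.of fun x y => Φ (Matrix.of fun a b => M (x.1, a) (y.1, b)) x.2 y.2

/-- Complete positivity: for every `k`, `id_{Fin k} ⊗ Φ` preserves positive semidefiniteness. -/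
def IsCPMap {A B : Type*} [Fintype A] [Fintype B]
    (Φ : Matrix A A ℂ →ₗ[ℂ] Matrix B B ℂ) : Prop :=
  ∀ (k : ℕ) (M : Matrix (Fin k × A) (Fin k × A) ℂ), M.PosSemidef →
    (idTensor (Fin k) Φ M).PosSemidef

/-- A CPTP map (quantum channel). -/
def IsCPTP {A B : Type*} [Fintype A] [Fintype B]
    (Φ : Matrix A A ℂ →ₗ[ℂ] Matrix B B ℂ) : Prop :=
  IsCPMap Φ ∧ ∀ M : Matrix A A ℂ, (Φ M).trace = M.trace

/-- The family of states on `Q ⊗ E` steered from `R` by measurements on a tripartite state. -/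
def steered {R Q E : Type*} [Fintype R] [Fintype Q] [DecidableEq Q] [Fintype E] [DecidableEq E]
    (ρ : Matrix (R × Q × E) (R × Q × E) ℂ) : Set (Matrix (Q × E) (Q × E) ℂ) :=
  { ω | ∃ P : Matrix R R ℂ, P.PosSemidef ∧
      (ptraceLeft ((P ⊗ₖ (1 : Matrix (Q × E) (Q × E) ℂ)) * ρ)).trace ≠ 0 ∧
      ω = ((ptraceLeft ((P ⊗ₖ (1 : Matrix (Q × E) (Q × E) ℂ)) * ρ)).trace)⁻¹ •
            ptraceLeft ((P ⊗ₖ (1 : Matrix (Q × E) (Q × E) ℂ)) * ρ) }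

/-- A post-selected family of bipartite system-environment states: the normalized
output state space of some completely positive map `𝒫 : Q₀E₀ → QE`. -/
def IsPostSelected {Q E : Type*} [Fintype Q] [Fintype E]
    (S : Set (Matrix (Q × E) (Q × E) ℂ)) : Prop :=
  ∃ (n0 m0 : ℕ)
    (P : Matrix (Fin n0 × Fin m0) (Fin n0 × Fin m0) ℂ →ₗ[ℂ] Matrix (Q × E) (Q × E) ℂ),
    IsCPMap P ∧
    S = { ω | ∃ ρ0, IsState ρ0 ∧ (P ρ0).trace ≠ 0 ∧ ω = ((P ρ0).trace)⁻¹ • P ρ0 }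

open Filter Topology

/-- The quadratic functional whose supremum over `Y` is the resolvent of the relative modular
operator of `σ` and `ρ`. -/
def modularForm {n : Type*} [Fintype n] (s : ℝ) (ρ σ Y : Matrix n n ℂ) : ℝ :=
  2 * (Y * ρ).trace.re - (Y * Yᴴ * σ).trace.re - s * (Yᴴ * Y * ρ).trace.re

theorem trace_mul_diagonal {n : Type*} [Fintype n] [DecidableEq n] (A : Matrix n n ℂ)
    (d : n → ℂ) : (A * diagonal d).trace = ∑ i, A i i * d i := by
  simp [Matrix.trace, Matrix.mul_diagonal]

theorem modularForm_conj {n : Type*} [Fintype n] [DecidableEq n] {U W : Matrix n n ℂ}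
    (hU : Uᴴ * U = 1) (hW : Wᴴ * W = 1) (p q : n → ℝ) (s : ℝ) (y : Matrix n n ℂ) :
    modularForm s (U * diagonal (fun i => (p i : ℂ)) * Uᴴ)
        (W * diagonal (fun i => (q i : ℂ)) * Wᴴ) (W * y * Uᴴ) =
      ∑ i, ∑ j, (2 * (p i * ((Uᴴ * W) i j * y j i).re) -
        (q j + s * p i) * Complex.normSq (y j i)) := by
  have h1 : (W * y * Uᴴ * (U * diagonal (fun i => (p i : ℂ)) * Uᴴ)).trace =
      ∑ i, ((Uᴴ * W) * y) i i * p i := by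
    rw [← trace_mul_diagonal]
    calc _ = (W * y * (Uᴴ * U) * diagonal (fun i => (p i : ℂ)) * Uᴴ).trace := by
          simp only [Matrix.mul_assoc]
      _ = _ := by
          rw [hU, Matrix.mul_one, Matrix.trace_mul_comm]
          simp only [Matrix.mul_assoc]
  have h2 : (W * y * Uᴴ * (W * y * Uᴴ)ᴴ * (W * diagonal (fun i => (q i : ℂ)) * Wᴴ)).trace =
      ∑ j, (y * yᴴ) j j * q j := by
    rw [← trace_mul_diagonal]
    simp only [conjTranspose_mul, conjTranspose_conjTranspose]
    calc _ = (W * (y * (Uᴴ * U) * yᴴ * (Wᴴ * W) * diagonal (fun i => (q i : ℂ)) * Wᴴ)).trace := by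
          simp only [Matrix.mul_assoc]
      _ = ((y * yᴴ * diagonal (fun i => (q i : ℂ))) * (Wᴴ * W)).trace := by
          rw [hU, hW, Matrix.mul_one, Matrix.mul_one, Matrix.trace_mul_comm]
          simp only [Matrix.mul_assoc, hW]
      _ = _ := by rw [hW, Matrix.mul_one]
  have h3 : ((W * y * Uᴴ)ᴴ * (W * y * Uᴴ) * (U * diagonal (fun i => (p i : ℂ)) * Uᴴ)).trace =
      ∑ i, (yᴴ * y) i i * p i := by
    rw [← trace_mul_diagonal]
    simp only [conjTranspose_mul, conjTranspose_conjTranspose]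
    calc _ = (U * (yᴴ * (Wᴴ * W) * y * (Uᴴ * U) * diagonal (fun i => (p i : ℂ)) * Uᴴ)).trace := by
          simp only [Matrix.mul_assoc]
      _ = ((yᴴ * y * diagonal (fun i => (p i : ℂ))) * (Uᴴ * U)).trace := by
          rw [hU, hW, Matrix.mul_one, Matrix.mul_one, Matrix.trace_mul_comm]
          simp only [Matrix.mul_assoc, hU]
      _ = _ := by rw [hU, Matrix.mul_one]
  have h1' : (∑ i, ((Uᴴ * W) * y) i i * (p i : ℂ)).re =
      ∑ i, ∑ j, p i * ((Uᴴ * W) i j * y j i).re := by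
    simp only [Matrix.mul_apply (M := Uᴴ * W), Complex.re_sum, Complex.re_mul_ofReal]
    exact Finset.sum_congr rfl fun i _ => by rw [mul_comm, Finset.mul_sum]
  have h2' : (∑ j, (y * yᴴ) j j * (q j : ℂ)).re = ∑ i, ∑ j, q j * Complex.normSq (y j i) := by
    rw [Finset.sum_comm]
    simp only [Matrix.mul_apply, Complex.re_sum, Complex.re_mul_ofReal, conjTranspose_apply,
      Complex.star_def, Complex.mul_conj, Complex.ofReal_re]
    exact Finset.sum_congr rfl fun i _ => by rw [mul_comm, Finset.mul_sum]
  have h3' : (∑ i, (yᴴ * y) i i * (p i : ℂ)).re = ∑ i, ∑ j, p i * Complex.normSq (y j i) := by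
    simp only [Matrix.mul_apply, Complex.re_sum, Complex.re_mul_ofReal, conjTranspose_apply,
      Complex.star_def, ← Complex.normSq_eq_conj_mul_self, Complex.ofReal_re]
    exact Finset.sum_congr rfl fun i _ => by rw [mul_comm, Finset.mul_sum]
  rw [modularForm, h1, h2, h3, h1', h2', h3']
  simp only [Finset.mul_sum, ← Finset.sum_sub_distrib]
  refine Finset.sum_congr rfl fun i _ => Finset.sum_congr rfl fun j _ => ?_
  ring

theorem modularForm_le {n : Type*} [Fintype n] [DecidableEq n] {U W : Matrix n n ℂ}
    (hU : Uᴴ * U = 1) (hW : Wᴴ * W = 1) {p q : n → ℝ} (hp : ∀ i, 0 ≤ p i) (hq : ∀ i, 0 < q i)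
    {s : ℝ} (hs : 0 ≤ s) (Y : Matrix n n ℂ) :
    modularForm s (U * diagonal (fun i => (p i : ℂ)) * Uᴴ)
        (W * diagonal (fun i => (q i : ℂ)) * Wᴴ) Y ≤
      ∑ x : n × n, Complex.normSq ((Uᴴ * W) x.1 x.2) *
        (p x.1 ^ 2 / (q x.2 + s * p x.1)) := by
  have hY : Y = W * (Wᴴ * Y * U) * Uᴴ := by
    have : W * (Wᴴ * Y * U) * Uᴴ = (W * Wᴴ) * Y * (U * Uᴴ) := by simp only [Matrix.mul_assoc]
    rw [this, mul_eq_one_comm.1 hU, mul_eq_one_comm.1 hW, Matrix.one_mul, Matrix.mul_one]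
  rw [hY, modularForm_conj hU hW, Fintype.sum_prod_type]
  refine Finset.sum_le_sum fun i _ => Finset.sum_le_sum fun j _ => ?_
  generalize (Wᴴ * Y * U) j i = y
  generalize (Uᴴ * W) i j = c
  have hd : 0 < q j + s * p i := by have := hp i; have := hq j; positivity
  generalize q j + s * p i = d at hd
  rw [← mul_div_assoc, le_div_iff₀ hd]
  have h := Complex.normSq_nonneg (p i * star c - d * y)
  simp only [Complex.normSq_apply, Complex.mul_re, Complex.sub_re, Complex.sub_im, Complex.mul_im,
    Complex.ofReal_re, Complex.ofReal_im, Complex.star_def, Complex.conj_re, Complex.conj_im] at h ⊢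
  nlinarith

theorem exists_modularForm_eq {n : Type*} [Fintype n] [DecidableEq n] {U W : Matrix n n ℂ}
    (hU : Uᴴ * U = 1) (hW : Wᴴ * W = 1) {p q : n → ℝ} (hp : ∀ i, 0 ≤ p i) (hq : ∀ i, 0 < q i)
    {s : ℝ} (hs : 0 ≤ s) :
    ∃ Y, modularForm s (U * diagonal (fun i => (p i : ℂ)) * Uᴴ)
        (W * diagonal (fun i => (q i : ℂ)) * Wᴴ) Y =
      ∑ x : n × n, Complex.normSq ((Uᴴ * W) x.1 x.2) *
        (p x.1 ^ 2 / (q x.2 + s * p x.1)) := by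
  refine ⟨W * Matrix.of (fun j i => ((p i / (q j + s * p i) : ℝ) : ℂ) * star ((Uᴴ * W) i j)) * Uᴴ,
    ?_⟩
  rw [modularForm_conj hU hW, Fintype.sum_prod_type]
  refine Finset.sum_congr rfl fun i _ => Finset.sum_congr rfl fun j _ => ?_
  simp only [Matrix.of_apply]
  generalize (Uᴴ * W) i j = c
  have hd : q j + s * p i ≠ 0 := by have := hp i; have := hq j; positivity
  generalize q j + s * p i = d at hd
  simp only [Complex.normSq_apply, Complex.mul_re, Complex.mul_im,
    Complex.ofReal_re, Complex.ofReal_im, Complex.star_def, Complex.conj_re, Complex.conj_im]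
  field_simp
  ring

/-- The amplification `Y ⊗ 1_E` of an operator on `R ⊗ Q`. -/
def amplify {R Q : Type*} (E : Type*) [DecidableEq E] (Y : Matrix (R × Q) (R × Q) ℂ) :
    Matrix (R × Q × E) (R × Q × E) ℂ :=
  Matrix.of fun x y => if x.2.2 = y.2.2 then Y (x.1, x.2.1) (y.1, y.2.1) else 0

section amplify

variable {R Q E : Type*} [Fintype R] [Fintype Q] [Fintype E] [DecidableEq E]

theorem amplify_mul (Y Z : Matrix (R × Q) (R × Q) ℂ) :
    amplify E Y * amplify E Z = amplify E (Y * Z) := by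
  ext ⟨r, q, e⟩ ⟨r', q', e'⟩
  simp [amplify, Matrix.mul_apply, Fintype.sum_prod_type]

theorem amplify_conjTranspose {R Q E : Type*} [DecidableEq E] (Y : Matrix (R × Q) (R × Q) ℂ) :
    (amplify E Y)ᴴ = amplify E Yᴴ := by
  ext ⟨r, q, e⟩ ⟨r', q', e'⟩
  by_cases h : e = e' <;> simp [amplify, h, eq_comm]

theorem trace_amplify_mul (Y : Matrix (R × Q) (R × Q) ℂ) (M : Matrix (R × Q × E) (R × Q × E) ℂ) :
    (amplify E Y * M).trace = (Y * ptrace3E M).trace := by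
  simp only [amplify, ptrace3E, Matrix.trace, Matrix.diag, Matrix.mul_apply, of_apply,
    Fintype.sum_prod_type, ite_mul, zero_mul, Finset.sum_ite_eq, Finset.mem_univ, if_true,
    Finset.mul_sum]
  refine Finset.sum_congr rfl fun r _ => Finset.sum_congr rfl fun q _ => ?_
  rw [Finset.sum_comm]
  refine Finset.sum_congr rfl fun r' _ => ?_
  rw [Finset.sum_comm]

theorem modularForm_amplify (s : ℝ) (ρ σ : Matrix (R × Q × E) (R × Q × E) ℂ)
    (Y : Matrix (R × Q) (R × Q) ℂ) :
    modularForm s ρ σ (amplify E Y) = modularForm s (ptrace3E ρ) (ptrace3E σ) Y := by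
  simp only [modularForm, amplify_conjTranspose, amplify_mul, trace_amplify_mul]

end amplify

theorem sum_mul_log_sub_le {ι κ : Type*} [Fintype ι] [Fintype κ]
    {w p q : ι → ℝ} {w' p' q' : κ → ℝ}
    (hp : ∀ i, 0 ≤ p i) (hq : ∀ i, 0 < q i) (hp' : ∀ i, 0 ≤ p' i) (hq' : ∀ i, 0 < q' i)
    (hsum : ∑ i, w i * p i = ∑ i, w' i * p' i)
    (h : ∀ s : ℝ, 0 ≤ s → ∑ i, w i * (p i ^ 2 / (q i + s * p i)) ≤
      ∑ i, w' i * (p' i ^ 2 / (q' i + s * p' i))) :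
    ∑ i, w i * (p i * Real.log (p i) - p i * Real.log (q i)) ≤
      ∑ i, w' i * (p' i * Real.log (p' i) - p' i * Real.log (q' i)) := by
  have hderiv : ∀ {a b : ℝ}, 0 ≤ a → 0 < b → ∀ s : ℝ, 0 ≤ s →
      HasDerivAt (fun s => a * (Real.log (b + s * a) - Real.log b)) (a ^ 2 / (b + s * a)) s := by
    intro a b ha hb s hs
    have hpos : b + s * a ≠ 0 := by positivity
    have h1 : HasDerivAt (fun s => b + s * a) a s := by
      simpa using ((hasDerivAt_id s).mul_const a).const_add b
    have h2 := ((h1.log hpos).sub_const (Real.log b)).const_mul a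
    exact h2.congr_deriv (by ring)
  have hlim : ∀ {a b : ℝ}, 0 ≤ a → 0 < b → Tendsto
      (fun s : ℝ => a * (Real.log (b + s * a) - Real.log b) - a * Real.log s) atTop
      (𝓝 (a * Real.log a - a * Real.log b)) := by
    intro a b ha hb
    rcases ha.eq_or_lt with rfl | ha
    · simp
    · have h1 : Tendsto (fun s : ℝ => Real.log (b * s⁻¹ + a)) atTop (𝓝 (Real.log (b * 0 + a))) :=
        ((tendsto_inv_atTop_zero.const_mul b).add_const a).log (by simp [ha.ne'])
      have h2 := ((h1.sub_const (Real.log b)).const_mul a)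
      rw [mul_zero, zero_add, mul_sub] at h2
      refine h2.congr' ?_
      filter_upwards [eventually_gt_atTop 0] with s hs
      have : b + s * a = (b * s⁻¹ + a) * s := by field_simp
      rw [this, Real.log_mul (by positivity) hs.ne']
      ring
  have hle : ∀ N : ℝ, 0 ≤ N →
      ∑ i, w i * (p i * (Real.log (q i + N * p i) - Real.log (q i))) ≤
      ∑ i, w' i * (p' i * (Real.log (q' i + N * p' i) - Real.log (q' i))) := by
    let D : ℝ → ℝ := fun s =>
      ∑ i, w' i * (p' i * (Real.log (q' i + s * p' i) - Real.log (q' i))) -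
      ∑ i, w i * (p i * (Real.log (q i + s * p i) - Real.log (q i)))
    have hD : ∀ s : ℝ, 0 ≤ s → HasDerivAt D
        (∑ i, w' i * (p' i ^ 2 / (q' i + s * p' i)) -
          ∑ i, w i * (p i ^ 2 / (q i + s * p i))) s := fun s hs =>
      (HasDerivAt.fun_sum fun i _ => (hderiv (hp' i) (hq' i) s hs).const_mul _).sub
        (HasDerivAt.fun_sum fun i _ => (hderiv (hp i) (hq i) s hs).const_mul _)
    have hmono : MonotoneOn D (Set.Ici 0) := by
      refine monotoneOn_of_deriv_nonneg (convex_Ici 0)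
        (fun s hs => (hD s hs).continuousAt.continuousWithinAt) ?_ ?_
      · intro s hs
        rw [interior_Ici] at hs
        exact (hD s hs.le).differentiableAt.differentiableWithinAt
      · intro s hs
        rw [interior_Ici] at hs
        rw [(hD s hs.le).deriv]
        exact sub_nonneg.2 (h s hs.le)
    intro N hN
    have := hmono (Set.mem_Ici.2 le_rfl) (Set.mem_Ici.2 hN) hN
    simpa [D] using this
  refine le_of_tendsto_of_tendsto
    (tendsto_finsetSum _ fun i _ => (hlim (hp i) (hq i)).const_mul (w i))
    (tendsto_finsetSum _ fun i _ => (hlim (hp' i) (hq' i)).const_mul (w' i)) ?_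
  filter_upwards [eventually_ge_atTop 0] with N hN
  have h1 := hle N hN
  simp only [mul_sub, Finset.sum_sub_distrib, ← mul_assoc, ← Finset.sum_mul, hsum] at h1 ⊢
  linarith

theorem Matrix.IsHermitian.eq_conj_diagonal {n : Type*} [Fintype n] [DecidableEq n]
    {A : Matrix n n ℂ} (hA : A.IsHermitian) :
    A = (hA.eigenvectorUnitary : Matrix n n ℂ) * diagonal (fun i => (hA.eigenvalues i : ℂ)) *
      (hA.eigenvectorUnitary : Matrix n n ℂ)ᴴ := by
  conv_lhs => rw [hA.spectral_theorem, Unitary.conjStarAlgAut_apply]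
  rfl

theorem Matrix.IsHermitian.eigenvectorUnitary_conjTranspose_mul {n : Type*} [Fintype n]
    [DecidableEq n] {A : Matrix n n ℂ} (hA : A.IsHermitian) :
    (hA.eigenvectorUnitary : Matrix n n ℂ)ᴴ * (hA.eigenvectorUnitary : Matrix n n ℂ) = 1 :=
  Unitary.coe_star_mul_self hA.eigenvectorUnitary

theorem sum_normSq_mul_fst {n : Type*} [Fintype n] [DecidableEq n] {U W : Matrix n n ℂ}
    (hU : Uᴴ * U = 1) (hW : Wᴴ * W = 1) (g : n → ℝ) :
    ∑ x : n × n, Complex.normSq ((Uᴴ * W) x.1 x.2) * g x.1 = ∑ i, g i := by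
  rw [Fintype.sum_prod_type]
  refine Finset.sum_congr rfl fun i _ => ?_
  have h : (Uᴴ * W) * (Uᴴ * W)ᴴ = 1 := by
    rw [conjTranspose_mul, conjTranspose_conjTranspose, Matrix.mul_assoc, ← Matrix.mul_assoc W,
      mul_eq_one_comm.1 hW, Matrix.one_mul, hU]
  have hi := congrFun (congrFun h i) i
  rw [Matrix.mul_apply, one_apply_eq] at hi
  simp only [conjTranspose_apply, Complex.star_def, Complex.mul_conj] at hi
  dsimp only
  rw [← Finset.sum_mul, show ∑ j, Complex.normSq ((Uᴴ * W) i j) = 1 by exact_mod_cast hi, one_mul]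

theorem sum_normSq_mul_mul_snd {n : Type*} [Fintype n] [DecidableEq n] (U W : Matrix n n ℂ)
    (p g : n → ℝ) :
    ∑ x : n × n, Complex.normSq ((Uᴴ * W) x.1 x.2) * (p x.1 * g x.2) =
      ∑ j, ((Wᴴ * (U * diagonal (fun i => (p i : ℂ)) * Uᴴ) * W) j j).re * g j := by
  rw [Fintype.sum_prod_type_right]
  refine Finset.sum_congr rfl fun j _ => ?_
  have h : Wᴴ * (U * diagonal (fun i => (p i : ℂ)) * Uᴴ) * W =
      (Uᴴ * W)ᴴ * diagonal (fun i => (p i : ℂ)) * (Uᴴ * W) := by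
    simp only [conjTranspose_mul, conjTranspose_conjTranspose, Matrix.mul_assoc]
  rw [h, Matrix.mul_apply, Complex.re_sum, Finset.sum_mul]
  refine Finset.sum_congr rfl fun i _ => ?_
  rw [Matrix.mul_diagonal, conjTranspose_apply, mul_right_comm, Complex.re_mul_ofReal,
    Complex.star_def, ← Complex.normSq_eq_conj_mul_self, Complex.ofReal_re]
  ring

section partialTrace

variable {A B : Type*} [Fintype A]

theorem Matrix.PosSemidef.ptraceLeft [Fintype B] {M : Matrix (A × B) (A × B) ℂ}
    (hM : M.PosSemidef) : (ptraceLeft M).PosSemidef := by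
  have h : _root_.ptraceLeft M = ∑ a, M.submatrix (fun b => (a, b)) (fun b => (a, b)) := by
    ext x y
    simp [_root_.ptraceLeft, Matrix.sum_apply]
  rw [h]
  exact posSemidef_sum _ fun a _ => hM.submatrix _

theorem Matrix.PosSemidef.ptrace3E {R Q E : Type*} [Fintype E]
    {M : Matrix (R × Q × E) (R × Q × E) ℂ} (hM : M.PosSemidef) : (ptrace3E M).PosSemidef := by
  have h : _root_.ptrace3E M =
      ∑ e, M.submatrix (fun x : R × Q => (x.1, x.2, e)) (fun x => (x.1, x.2, e)) := by
    ext x y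
    simp [_root_.ptrace3E, Matrix.sum_apply]
  rw [h]
  exact posSemidef_sum _ fun a _ => hM.submatrix _

theorem trace_ptrace3E {R Q E : Type*} [Fintype R] [Fintype Q] [Fintype E]
    (M : Matrix (R × Q × E) (R × Q × E) ℂ) : (ptrace3E M).trace = M.trace := by
  simp [ptrace3E, Matrix.trace, Fintype.sum_prod_type]

theorem ptraceLeft_conj_one_kronecker [DecidableEq A] [Fintype B] (W : Matrix B B ℂ)
    (M : Matrix (A × B) (A × B) ℂ) :
    ptraceLeft (((1 : Matrix A A ℂ) ⊗ₖ W)ᴴ * M * ((1 : Matrix A A ℂ) ⊗ₖ W)) =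
      Wᴴ * ptraceLeft M * W := by
  ext x y
  simp only [ptraceLeft, Matrix.mul_apply, of_apply, Fintype.sum_prod_type, kroneckerMap_apply,
    conjTranspose_apply, one_apply, ite_mul, one_mul, zero_mul, mul_ite, mul_zero, apply_ite star,
    star_zero, Finset.sum_ite_irrel, Finset.sum_const_zero, Finset.sum_ite_eq',
    Finset.mem_univ, if_true, Finset.mul_sum, Finset.sum_mul]
  rw [Finset.sum_comm]
  refine Finset.sum_congr rfl fun b _ => ?_
  rw [Finset.sum_comm]

theorem ptrace3E_one_kronecker {R Q E : Type*} [DecidableEq R] [DecidableEq Q] [Fintype E]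
    [DecidableEq E] (τ : Matrix (Q × E) (Q × E) ℂ) (ε : ℝ) :
    ptrace3E ((1 : Matrix R R ℂ) ⊗ₖ (τ + (ε : ℂ) • 1)) =
      (1 : Matrix R R ℂ) ⊗ₖ (ptraceRight τ + ((Fintype.card E * ε : ℝ) : ℂ) • 1) := by
  ext ⟨r, q⟩ ⟨r', q'⟩
  by_cases hr : r = r' <;> by_cases hq : q = q' <;>
    simp [ptrace3E, ptraceRight, hr, hq, one_apply, Finset.sum_add_distrib]

theorem ptraceRight_ptraceLeft {R Q E : Type*} [Fintype R] [Fintype E]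
    (M : Matrix (R × Q × E) (R × Q × E) ℂ) :
    ptraceRight (ptraceLeft M) = ptraceLeft (ptrace3E M) := by
  ext x y
  simp only [ptraceRight, ptraceLeft, ptrace3E, of_apply]
  exact Finset.sum_comm

end partialTrace

section conditionalEntropy

variable {A B : Type*} [Fintype A] [DecidableEq A] [Fintype B] [DecidableEq B]

theorem one_kronecker_conjTranspose_mul {W : Matrix B B ℂ} (hW : Wᴴ * W = 1) :
    ((1 : Matrix A A ℂ) ⊗ₖ W)ᴴ * ((1 : Matrix A A ℂ) ⊗ₖ W) = 1 := by
  rw [conjTranspose_kronecker, ← mul_kronecker_mul, hW]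
  simp

theorem one_kronecker_add_smul_eq_conj_diagonal {τ : Matrix B B ℂ} (hτ : τ.IsHermitian) (ε : ℝ) :
    (1 : Matrix A A ℂ) ⊗ₖ (τ + (ε : ℂ) • 1) =
      ((1 : Matrix A A ℂ) ⊗ₖ (hτ.eigenvectorUnitary : Matrix B B ℂ)) *
        diagonal (fun x : A × B => ((hτ.eigenvalues x.2 + ε : ℝ) : ℂ)) *
        ((1 : Matrix A A ℂ) ⊗ₖ (hτ.eigenvectorUnitary : Matrix B B ℂ))ᴴ := by
  set W : Matrix B B ℂ := (hτ.eigenvectorUnitary : Matrix B B ℂ) with hWdef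
  have hW : Wᴴ * W = 1 := hτ.eigenvectorUnitary_conjTranspose_mul
  have hd : diagonal (fun x : A × B => ((hτ.eigenvalues x.2 + ε : ℝ) : ℂ)) =
      (1 : Matrix A A ℂ) ⊗ₖ (diagonal (fun i => (hτ.eigenvalues i : ℂ)) + (ε : ℂ) • 1) := by
    rw [← diagonal_one, ← diagonal_one, ← diagonal_smul, diagonal_add,
      diagonal_kronecker_diagonal]
    simp
  rw [hd, conjTranspose_kronecker, conjTranspose_one, ← mul_kronecker_mul, ← mul_kronecker_mul,
    Matrix.one_mul, Matrix.one_mul, Matrix.mul_add, Matrix.add_mul, ← hτ.eq_conj_diagonal,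
    Matrix.mul_smul, Matrix.smul_mul, Matrix.mul_one, mul_eq_one_comm.1 hW]

theorem sum_relative_entropy_eq {ρ : Matrix (A × B) (A × B) ℂ} (hρ : ρ.IsHermitian)
    (hτ : (ptraceLeft ρ).IsHermitian) (ε : ℝ) :
    ∑ x : (A × B) × (A × B),
      Complex.normSq (((hρ.eigenvectorUnitary : Matrix (A × B) (A × B) ℂ)ᴴ *
        ((1 : Matrix A A ℂ) ⊗ₖ (hτ.eigenvectorUnitary : Matrix B B ℂ))) x.1 x.2) *
        (hρ.eigenvalues x.1 * Real.log (hρ.eigenvalues x.1) -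
          hρ.eigenvalues x.1 * Real.log (hτ.eigenvalues x.2.2 + ε)) =
      - vnEntropy ρ - ∑ k, hτ.eigenvalues k * Real.log (hτ.eigenvalues k + ε) := by
  set W : Matrix B B ℂ := (hτ.eigenvectorUnitary : Matrix B B ℂ) with hWdef
  have hW : Wᴴ * W = 1 := hτ.eigenvectorUnitary_conjTranspose_mul
  have hW' : ((1 : Matrix A A ℂ) ⊗ₖ W)ᴴ * ((1 : Matrix A A ℂ) ⊗ₖ W) = 1 :=
    one_kronecker_conjTranspose_mul hW
  have hdiag : Wᴴ * ptraceLeft ρ * W = diagonal (fun i => (hτ.eigenvalues i : ℂ)) := by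
    conv_lhs => rw [hτ.eq_conj_diagonal, ← hWdef]
    calc _ = (Wᴴ * W) * diagonal (fun i => (hτ.eigenvalues i : ℂ)) * (Wᴴ * W) := by
          simp only [Matrix.mul_assoc]
      _ = _ := by rw [hW, Matrix.one_mul, Matrix.mul_one]
  simp only [mul_sub, Finset.sum_sub_distrib]
  rw [sum_normSq_mul_fst hρ.eigenvectorUnitary_conjTranspose_mul hW'
      (fun i => hρ.eigenvalues i * Real.log (hρ.eigenvalues i)),
    sum_normSq_mul_mul_snd _ _ _ (fun x : A × B => Real.log (hτ.eigenvalues x.2 + ε)),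
    ← hρ.eq_conj_diagonal, vnEntropy, dif_pos hρ]
  congr 1
  · simp [Real.negMulLog]
  · rw [Fintype.sum_prod_type_right]
    refine Finset.sum_congr rfl fun k _ => ?_
    have hk := congrArg Complex.re (congrFun (congrFun (ptraceLeft_conj_one_kronecker W ρ) k) k)
    rw [hdiag, diagonal_apply_eq, Complex.ofReal_re, ptraceLeft, of_apply, Complex.re_sum] at hk
    dsimp only
    rw [← Finset.sum_mul, hk]

theorem tendsto_sum_mul_log_add {τ : Matrix B B ℂ} (hτ : τ.IsHermitian) (c : ℝ) :
    Tendsto (fun ε : ℝ => ∑ k, hτ.eigenvalues k * Real.log (hτ.eigenvalues k + c * ε))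
      (𝓝[>] 0) (𝓝 (- vnEntropy τ)) := by
  have h : - vnEntropy τ = ∑ k, hτ.eigenvalues k * Real.log (hτ.eigenvalues k) := by
    simp [vnEntropy, hτ, Real.negMulLog]
  rw [h]
  refine tendsto_finsetSum _ fun k _ => ?_
  generalize hτ.eigenvalues k = t
  rcases eq_or_ne t 0 with rfl | ht
  · simp
  · have h1 : ContinuousAt (fun ε : ℝ => t * Real.log (t + c * ε)) 0 := by
      refine continuousAt_const.mul (ContinuousAt.log (by fun_prop) (by simpa using ht))
    have h2 := h1.tendsto
    simp only [mul_zero, add_zero] at h2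
    exact h2.mono_left nhdsWithin_le_nhds

end conditionalEntropy

/-- **Strong subadditivity** of the von Neumann entropy. -/
theorem condMutualInfo_nonneg {R Q E : Type*} [Fintype R] [DecidableEq R] [Fintype Q]
    [DecidableEq Q] [Fintype E] [DecidableEq E] [Nonempty E]
    {ρ : Matrix (R × Q × E) (R × Q × E) ℂ} (hρ : ρ.PosSemidef) : 0 ≤ condMutualInfo ρ := by
  have hτ := hρ.ptraceLeft
  have hρ' := hρ.ptrace3E
  have hτ' := hρ'.ptraceLeft
  have hcard : (0 : ℝ) < Fintype.card E := by exact_mod_cast Fintype.card_pos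
  have hU := hρ.isHermitian.eigenvectorUnitary_conjTranspose_mul
  have hU' := hρ'.isHermitian.eigenvectorUnitary_conjTranspose_mul
  have hW := one_kronecker_conjTranspose_mul (A := R)
    hτ.isHermitian.eigenvectorUnitary_conjTranspose_mul
  have hW' := one_kronecker_conjTranspose_mul (A := R)
    hτ'.isHermitian.eigenvectorUnitary_conjTranspose_mul
  have hsum : ∑ i, hρ'.isHermitian.eigenvalues i = ∑ i, hρ.isHermitian.eigenvalues i := by
    have h := trace_ptrace3E ρ
    rw [hρ.isHermitian.trace_eq_sum_eigenvalues, hρ'.isHermitian.trace_eq_sum_eigenvalues] at h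
    exact_mod_cast h
  have key : ∀ ε : ℝ, 0 < ε →
      - vnEntropy (ptrace3E ρ) - ∑ k, hτ'.isHermitian.eigenvalues k *
          Real.log (hτ'.isHermitian.eigenvalues k + Fintype.card E * ε) ≤
        - vnEntropy ρ - ∑ k, hτ.isHermitian.eigenvalues k *
          Real.log (hτ.isHermitian.eigenvalues k + 1 * ε) := by
    intro ε hε
    have hq : ∀ x : R × Q × E, 0 < hτ.isHermitian.eigenvalues x.2 + 1 * ε := fun x => by
      have := hτ.eigenvalues_nonneg x.2
      positivity
    have hq' : ∀ x : R × Q, 0 < hτ'.isHermitian.eigenvalues x.2 + Fintype.card E * ε := fun x => by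
      have := hτ'.eigenvalues_nonneg x.2
      positivity
    rw [← sum_relative_entropy_eq hρ.isHermitian, ← sum_relative_entropy_eq hρ'.isHermitian]
    refine sum_mul_log_sub_le (fun x => hρ'.eigenvalues_nonneg x.1) (fun x => hq' x.2)
      (fun x => hρ.eigenvalues_nonneg x.1) (fun x => hq x.2) ?_ fun s hs => ?_
    · rw [sum_normSq_mul_fst hU' hW', sum_normSq_mul_fst hU hW, hsum]
    · obtain ⟨Y, hY⟩ := exists_modularForm_eq hU' hW' hρ'.eigenvalues_nonneg hq' hs
      have hle := modularForm_le hU hW hρ.eigenvalues_nonneg hq hs (amplify E Y)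
      rw [← hρ.isHermitian.eq_conj_diagonal, ← one_kronecker_add_smul_eq_conj_diagonal,
        modularForm_amplify, ptrace3E_one_kronecker, ptraceRight_ptraceLeft, one_mul] at hle
      rw [← hρ'.isHermitian.eq_conj_diagonal, ← one_kronecker_add_smul_eq_conj_diagonal] at hY
      simp only [one_mul] at hle ⊢
      exact hY.symm.trans_le hle
  have hlim := le_of_tendsto_of_tendsto
    ((tendsto_sum_mul_log_add hτ'.isHermitian (Fintype.card E)).const_sub (- vnEntropy (ptrace3E ρ)))
    ((tendsto_sum_mul_log_add hτ.isHermitian 1).const_sub (- vnEntropy ρ))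
    (eventually_mem_nhdsWithin.mono key)
  rw [condMutualInfo]
  linarith

/-- If a tripartite state `ρ_RQE` satisfies the quantum data-processing
inequality for every joint system-environment isometric evolution, then `I(R;E|Q)_ρ = 0`. -/
theorem stmt1 {R Q E : Type} [Fintype R] [DecidableEq R] [Fintype Q] [DecidableEq Q]
    [Fintype E] [DecidableEq E]
    (ρ : Matrix (R × Q × E) (R × Q × E) ℂ) (hρ : IsState ρ)
    (hdp : ∀ (Q' E' : Type) [Fintype Q'] [DecidableEq Q'] [Fintype E'] [DecidableEq E']
      (V : Matrix (Q' × E') (Q × E) ℂ), Vᴴ * V = 1 →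
      mutualInfo (ptrace3E
          (((1 : Matrix R R ℂ) ⊗ₖ V) * ρ * ((1 : Matrix R R ℂ) ⊗ₖ V)ᴴ))
        ≤ mutualInfo (ptrace3E ρ)) :
    condMutualInfo ρ = 0 := by
  have hE : Nonempty E := by
    by_contra h
    rw [not_nonempty_iff] at h
    simpa [Matrix.trace] using hρ.2
  refine le_antisymm ?_ (condMutualInfo_nonneg hρ.1)
  let V : Matrix ((Q × E) × Unit) (Q × E) ℂ := Matrix.of fun x y => (1 : Matrix _ _ ℂ) x.1 y
  have hV : Vᴴ * V = 1 := by
    ext x y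
    simp [V, Matrix.mul_apply, Fintype.sum_prod_type (α₁ := Q × E), one_apply, eq_comm]
    split_ifs <;> simp
  have hσ : ptrace3E (((1 : Matrix R R ℂ) ⊗ₖ V) * ρ * ((1 : Matrix R R ℂ) ⊗ₖ V)ᴴ) = ρ := by
    have h1 : ((1 : Matrix R R ℂ) ⊗ₖ V) =
        (1 : Matrix (R × Q × E) (R × Q × E) ℂ).submatrix (fun x => (x.1, x.2.1)) id := by
      ext x y
      rw [← one_kronecker_one]
      rfl
    rw [h1]
    ext x y
    simp [ptrace3E, conjTranspose_submatrix, Matrix.mul_apply, one_apply]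
  have h := hdp (Q × E) Unit V hV
  have hR : ptraceRight (ptrace3E ρ) = ptraceRight ρ := by
    ext x y
    simp [ptraceRight, ptrace3E, Fintype.sum_prod_type]
  rw [hσ, mutualInfo, mutualInfo, hR] at h
  rw [condMutualInfo]
  linarith
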